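/- There exist constants c, c₁, c₂ > 0 such that the following holds. Let p̂ satisfy c·(log n)/n ≤ p̂ ≤ n^{1/log log n}/n, and let (G_t)_{t∈ℕ} be a sequence of random graphs on [n] such that every G_t is distributed as G_{n,p̂} (as holds for a stationary edge-Markovian evolving graph). Then with probability at least 1 − 2/n the flooding time T of (G_t) satisfies c₁ · log n / log(n·p̂) ≤ T ≤ c₂ · log n / log(n·p̂). -/

import Mathlib

open Finset MeasureTheory

noncomputable section

/-- Out-neighborhood `N_G(I)` of a set of nodes `I`. -/
def nbhd {n : ℕ} (G : SimpleGraph (Fin n)) (I : Finset (Fin n)) : Finset (Fin n) := by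
  classical exact Finset.univ.filter (fun v => v ∉ I ∧ ∃ u ∈ I, G.Adj u v)

/-- The informed sets of the flooding process on the graph sequence `Gs` with source `s`. -/
def informed {n : ℕ} (Gs : ℕ → SimpleGraph (Fin n)) (s : Fin n) : ℕ → Finset (Fin n)
  | 0 => {s}
  | t + 1 => informed Gs s t ∪ nbhd (Gs t) (informed Gs s t)

/-- `G` is an `(h,k)`-expander: every nonempty set of at most `h` nodes has
out-neighborhood of size at least `k` times its size. -/
def IsExpander {n : ℕ} (G : SimpleGraph (Fin n)) (h k : ℝ) : Prop :=
  ∀ I : Finset (Fin n), I.Nonempty → (I.card : ℝ) ≤ h →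
    k * (I.card : ℝ) ≤ ((nbhd G I).card : ℝ)

/-- Euclidean distance in the plane. -/
def euclDist (x y : ℝ × ℝ) : ℝ := Real.sqrt ((x.1 - y.1) ^ 2 + (x.2 - y.2) ^ 2)

/-- The grid `L_{n,ε}` of points `(iε, jε)`, `i, j ∈ ℕ`, `i, j ≤ √n/ε`. -/
def grid (n : ℕ) (ε : ℝ) : Finset (ℝ × ℝ) :=
  (Finset.range (⌊Real.sqrt n / ε⌋₊ + 1) ×ˢ Finset.range (⌊Real.sqrt n / ε⌋₊ + 1)).image
    (fun q => ((q.1 : ℝ) * ε, (q.2 : ℝ) * ε))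

/-- `Γ(x)`: grid points within (move) radius `r` of `x`. -/
def gamma (n : ℕ) (ε r : ℝ) (x : ℝ × ℝ) : Finset (ℝ × ℝ) := by
  classical exact (grid n ε).filter (fun y => euclDist x y ≤ r)

/-- The stationary distribution `π(x) = |Γ(x)| / Σ_y |Γ(y)|` of node positions. -/
def statDist (n : ℕ) (ε r : ℝ) (x : ℝ × ℝ) : ℝ :=
  if x ∈ grid n ε then
    ((gamma n ε r x).card : ℝ) / (∑ y ∈ grid n ε, ((gamma n ε r y).card : ℝ))
  else 0

/-- The `n` random positions `P` are independent, each distributed according to `π`. -/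
def IsIIDStationary (n : ℕ) (ε r : ℝ) {Ω : Type} [MeasurableSpace Ω] (μ : Measure Ω)
    (P : Ω → Fin n → ℝ × ℝ) : Prop :=
  ∀ f : Fin n → ℝ × ℝ, μ {ω | P ω = f} = ENNReal.ofReal (∏ i, statDist n ε r (f i))

/-- Number of cells per side: `m = ⌈√(5n)/R⌉`. -/
def numCells (n : ℕ) (R : ℝ) : ℕ := ⌈Real.sqrt (5 * n) / R⌉₊

/-- Side length of a cell. -/
def cellLen (n : ℕ) (R : ℝ) : ℝ := Real.sqrt n / (numCells n R : ℝ)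

/-- Membership of a point `x` in cell `(i,j)` of the `m × m` partition of the square
`[0,√n]²` (cells are half-open, except that the last row/column is closed above,
points of the square being below `√n` anyway). -/
def inCell (n : ℕ) (R : ℝ) (i j : ℕ) (x : ℝ × ℝ) : Prop :=
  ((i : ℝ) * cellLen n R ≤ x.1 ∧ (x.1 < ((i : ℝ) + 1) * cellLen n R ∨ i + 1 = numCells n R)) ∧
  ((j : ℝ) * cellLen n R ≤ x.2 ∧ (x.2 < ((j : ℝ) + 1) * cellLen n R ∨ j + 1 = numCells n R))

/-- The number of nodes whose positions (given by `p`) lie in cell `(i,j)`. -/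
def cellCount (n : ℕ) (R : ℝ) (p : Fin n → ℝ × ℝ) (i j : ℕ) : ℕ := by
  classical exact (Finset.univ.filter fun v => inCell n R i j (p v)).card

/-- The geometric graph: an edge between distinct `u, v` iff their positions are at
Euclidean distance at most `R`. -/
def geoGraph (n : ℕ) (R : ℝ) (p : Fin n → ℝ × ℝ) : SimpleGraph (Fin n) :=
  SimpleGraph.fromRel (fun u v => euclDist (p u) (p v) ≤ R)

/-- `x` lies in the square `[0,√n]²`. -/
def inSquare (n : ℕ) (x : ℝ × ℝ) : Prop :=
  0 ≤ x.1 ∧ x.1 ≤ Real.sqrt n ∧ 0 ≤ x.2 ∧ x.2 ≤ Real.sqrt n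

/-- The random graph `G` is distributed as the Erdős–Rényi graph `G_{n,p}`. -/
def IsErdosRenyi {n : ℕ} {Ω : Type} [MeasurableSpace Ω] (μ : Measure Ω)
    (G : Ω → SimpleGraph (Fin n)) (p : ℝ) : Prop :=
  ∀ H : SimpleGraph (Fin n),
    μ {ω | G ω = H} =
      ENNReal.ofReal (p ^ (Nat.card H.edgeSet) * (1 - p) ^ (n.choose 2 - Nat.card H.edgeSet))


lemma cyl {n : ℕ} {Ω : Type} [MeasurableSpace Ω] (μ : Measure Ω) [IsProbabilityMeasure μ]
    (G : Ω → SimpleGraph (Fin n)) (p : ℝ) (hG : IsErdosRenyi μ G p) (h0 : 0 ≤ p) (h1 : p ≤ 1)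
    (X Y : Finset (Sym2 (Fin n))) (hXY : Disjoint X Y)
    (hX : ∀ e ∈ X, ¬ e.IsDiag) (hY : ∀ e ∈ Y, ¬ e.IsDiag) :
    μ.real {ω | (∀ e ∈ X, e ∈ (G ω).edgeSet) ∧ ∀ e ∈ Y, e ∉ (G ω).edgeSet} ≤
      p ^ X.card * (1 - p) ^ Y.card := by
  classical
  set E : Finset (Sym2 (Fin n)) := univ.filter (fun e => ¬ e.IsDiag) with hE
  have hEc : E.card = n.choose 2 := by
    rw [hE, ← Fintype.card_subtype, Sym2.card_subtype_not_diag, Fintype.card_fin]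
  have hq : 0 ≤ 1 - p := by linarith
  set f : Sym2 (Fin n) → ℝ := fun e => if e ∈ Y then 0 else p with hf
  set g : Sym2 (Fin n) → ℝ := fun e => if e ∈ X then 0 else 1 - p with hg
  have hf0 : ∀ e, 0 ≤ f e := fun e => by simp only [hf]; split_ifs <;> linarith
  have hg0 : ∀ e, 0 ≤ g e := fun e => by simp only [hg]; split_ifs <;> linarith
  have hXE : X ⊆ E := fun e he => by simp [hE, hX e he]
  have hYE : Y ⊆ E := fun e he => by simp [hE, hY e he]
  have key : ∏ e ∈ E, (f e + g e) = p ^ X.card * (1 - p) ^ Y.card := by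
    have : ∀ e ∈ E, f e + g e = (if e ∈ X then p else 1) * (if e ∈ Y then 1 - p else 1) := by
      intro e _
      simp only [hf, hg]
      by_cases hx : e ∈ X
      · have hy : e ∉ Y := Finset.disjoint_left.1 hXY hx
        simp [hx, hy]
      · by_cases hy : e ∈ Y <;> simp [hx, hy]
    rw [Finset.prod_congr rfl this, Finset.prod_mul_distrib, Finset.prod_ite_mem,
      Finset.prod_ite_mem, Finset.inter_eq_right.2 hXE, Finset.inter_eq_right.2 hYE]
    simp
  set B : Finset (SimpleGraph (Fin n)) :=
    univ.filter (fun H => (∀ e ∈ X, e ∈ H.edgeSet) ∧ ∀ e ∈ Y, e ∉ H.edgeSet) with hB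
  have hsub : {ω | (∀ e ∈ X, e ∈ (G ω).edgeSet) ∧ ∀ e ∈ Y, e ∉ (G ω).edgeSet} ⊆
      ⋃ H ∈ B, {ω | G ω = H} := by
    intro ω hω
    simp only [Set.mem_iUnion]
    exact ⟨G ω, by simpa [hB] using hω, rfl⟩
  have hedge : ∀ H : SimpleGraph (Fin n), H.edgeFinset ⊆ E := by
    intro H e he
    simp only [hE, Finset.mem_filter, Finset.mem_univ, true_and]
    exact H.not_isDiag_of_mem_edgeFinset he
  have hreal : ∀ H ∈ B, μ.real {ω | G ω = H} =
      (∏ e ∈ H.edgeFinset, f e) * ∏ e ∈ E \ H.edgeFinset, g e := by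
    intro H hH
    simp only [hB, Finset.mem_filter, Finset.mem_univ, true_and] at hH
    have e1 : ∏ e ∈ H.edgeFinset, f e = p ^ H.edgeFinset.card := by
      rw [Finset.prod_congr rfl (g := fun _ => p), Finset.prod_const]
      intro e he
      have : e ∉ Y := fun hy => hH.2 e hy (by simpa using he)
      simp [hf, this]
    have e2 : ∏ e ∈ E \ H.edgeFinset, g e = (1 - p) ^ (E \ H.edgeFinset).card := by
      rw [Finset.prod_congr rfl (g := fun _ => 1 - p), Finset.prod_const]
      intro e he
      have : e ∉ X := fun hx => (Finset.mem_sdiff.1 he).2 (by simpa using hH.1 e hx)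
      simp [hg, this]
    have e3 : Nat.card H.edgeSet = H.edgeFinset.card := by
      rw [Nat.card_eq_fintype_card, SimpleGraph.edgeFinset_card]
    rw [e1, e2, Finset.card_sdiff_of_subset (hedge H), hEc, Measure.real, hG H, e3,
      ENNReal.toReal_ofReal (by positivity)]
  calc _ ≤ μ.real (⋃ H ∈ B, {ω | G ω = H}) := measureReal_mono hsub (measure_ne_top _ _)
    _ ≤ ∑ H ∈ B, μ.real {ω | G ω = H} := measureReal_biUnion_finset_le _ _
    _ = ∑ H ∈ B, (∏ e ∈ H.edgeFinset, f e) * ∏ e ∈ E \ H.edgeFinset, g e :=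
        Finset.sum_congr rfl hreal
    _ = ∑ S ∈ B.image (fun H => H.edgeFinset), (∏ e ∈ S, f e) * ∏ e ∈ E \ S, g e := by
        rw [Finset.sum_image]
        intro H _ H' _ h
        exact SimpleGraph.edgeFinset_inj.1 h
    _ ≤ ∑ S ∈ E.powerset, (∏ e ∈ S, f e) * ∏ e ∈ E \ S, g e := by
        apply Finset.sum_le_sum_of_subset_of_nonneg
        · intro S hS
          obtain ⟨H, -, rfl⟩ := Finset.mem_image.1 hS
          exact Finset.mem_powerset.2 (hedge H)
        · intro S _ _
          exact mul_nonneg (Finset.prod_nonneg fun e _ => hf0 e)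
            (Finset.prod_nonneg fun e _ => hg0 e)
    _ = _ := by rw [← Finset.prod_add, key]

lemma mem_nbhd {n : ℕ} {G : SimpleGraph (Fin n)} {I : Finset (Fin n)} {v : Fin n} :
    v ∈ nbhd G I ↔ v ∉ I ∧ ∃ u ∈ I, G.Adj u v := by
  classical
  simp [nbhd]

lemma card_prod_image {n : ℕ} [DecidableEq (Sym2 (Fin n))] (A B : Finset (Fin n))
    (h : Disjoint A B) :
    ((A ×ˢ B).image (fun q => s(q.1, q.2))).card = A.card * B.card := by
  classical
  rw [Finset.card_image_of_injOn, Finset.card_product]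
  rintro ⟨a, b⟩ h1 ⟨c, d⟩ h2 heq
  simp only [Finset.coe_product, Set.mem_prod, Finset.mem_coe] at h1 h2
  simp only [Sym2.eq_iff] at heq
  rcases heq with ⟨rfl, rfl⟩ | ⟨rfl, rfl⟩
  · rfl
  · exact absurd h2.2 (Finset.disjoint_left.1 h h1.1)

/-- no edges between two disjoint sets -/
lemma no_edge {n : ℕ} {Ω : Type} [MeasurableSpace Ω] (μ : Measure Ω) [IsProbabilityMeasure μ]
    (G : Ω → SimpleGraph (Fin n)) (p : ℝ) (hG : IsErdosRenyi μ G p) (h0 : 0 ≤ p) (h1 : p ≤ 1)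
    (A B : Finset (Fin n)) (hAB : Disjoint A B) :
    μ.real {ω | ∀ a ∈ A, ∀ b ∈ B, ¬ (G ω).Adj a b} ≤ (1 - p) ^ (A.card * B.card) := by
  classical
  have := cyl μ G p hG h0 h1 ∅ ((A ×ˢ B).image (fun q => s(q.1, q.2))) (by simp) (by simp) (by
    intro e he
    obtain ⟨⟨a, b⟩, hab, rfl⟩ := Finset.mem_image.1 he
    simp only [Finset.mem_product] at hab
    simp only [Sym2.mk_isDiag_iff]
    rintro rfl
    exact Finset.disjoint_left.1 hAB hab.1 hab.2)
  rw [card_prod_image A B hAB] at this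
  simp only [Finset.card_empty, pow_zero, one_mul] at this
  refine le_trans (measureReal_mono ?_) this
  intro ω hω
  simp only [Set.mem_ofPred_eq] at hω ⊢
  refine ⟨by simp, ?_⟩
  intro e he
  obtain ⟨⟨a, b⟩, hab, rfl⟩ := Finset.mem_image.1 he
  simp only [Finset.mem_product] at hab
  simpa using hω a hab.1 b hab.2

lemma star {n : ℕ} {Ω : Type} [MeasurableSpace Ω] (μ : Measure Ω) [IsProbabilityMeasure μ]
    (G : Ω → SimpleGraph (Fin n)) (p : ℝ) (hG : IsErdosRenyi μ G p) (h0 : 0 ≤ p) (h1 : p ≤ 1)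
    (v : Fin n) (S : Finset (Fin n)) (hv : v ∉ S) :
    μ.real {ω | ∀ b ∈ S, (G ω).Adj v b} ≤ p ^ S.card := by
  classical
  have := cyl μ G p hG h0 h1 (({v} ×ˢ S).image (fun q => s(q.1, q.2))) ∅ (by simp) (by
    intro e he
    obtain ⟨⟨a, b⟩, hab, rfl⟩ := Finset.mem_image.1 he
    simp only [Finset.mem_product, Finset.mem_singleton] at hab
    simp only [Sym2.mk_isDiag_iff]
    rintro rfl
    exact hv (hab.1 ▸ hab.2)) (by simp)
  rw [card_prod_image {v} S (by simpa using hv)] at this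
  simp only [Finset.card_empty, pow_zero, mul_one, Finset.card_singleton, one_mul] at this
  refine le_trans (measureReal_mono ?_) this
  intro ω hω
  simp only [Set.mem_ofPred_eq] at hω ⊢
  refine ⟨?_, by simp⟩
  intro e he
  obtain ⟨⟨a, b⟩, hab, rfl⟩ := Finset.mem_image.1 he
  simp only [Finset.mem_product, Finset.mem_singleton] at hab
  obtain ⟨rfl, hb⟩ := hab
  simpa using hω b hb

lemma nbhd_eq {n : ℕ} {Ω : Type} [MeasurableSpace Ω] (μ : Measure Ω) [IsProbabilityMeasure μ]
    (G : Ω → SimpleGraph (Fin n)) (p : ℝ) (hG : IsErdosRenyi μ G p) (h0 : 0 ≤ p) (h1 : p ≤ 1)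
    (A S : Finset (Fin n)) :
    μ.real {ω | nbhd (G ω) A = S} ≤
      (A.card * p) ^ S.card * (1 - p) ^ (A.card * (n - A.card - S.card)) := by
  classical
  have hq : 0 ≤ 1 - p := by linarith
  by_cases hd : Disjoint A S
  swap
  · have : {ω | nbhd (G ω) A = S} = ∅ := by
      ext ω
      simp only [Set.mem_ofPred_eq, Set.mem_empty_iff_false, iff_false]
      rintro rfl
      apply hd
      rw [Finset.disjoint_left]
      intro a ha hb
      exact (mem_nbhd.1 hb).1 ha
    rw [this]; simp only [measureReal_empty]; positivity
  set B : Finset (Fin n) := (A ∪ S)ᶜ with hB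
  have hBc : B.card = n - A.card - S.card := by
    rw [hB, Finset.card_compl, Fintype.card_fin, Finset.card_union_of_disjoint hd, Nat.sub_sub]
  have hAB : Disjoint A B := by
    rw [Finset.disjoint_left]; intro a ha hb; simp [hB, ha] at hb
  set X : (∀ v ∈ S, Fin n) → Finset (Sym2 (Fin n)) :=
    fun g => S.attach.image (fun v => s(g v.1 v.2, v.1)) with hXd
  set Y := (A ×ˢ B).image (fun q => s(q.1, q.2)) with hYd
  have hsub : {ω | nbhd (G ω) A = S} ⊆ ⋃ g ∈ S.pi (fun _ => A),
      {ω | (∀ e ∈ X g, e ∈ (G ω).edgeSet) ∧ ∀ e ∈ Y, e ∉ (G ω).edgeSet} := by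
    intro ω hω
    simp only [Set.mem_ofPred_eq] at hω
    have : ∀ v ∈ S, ∃ u ∈ A, (G ω).Adj u v := by
      intro v hv; rw [← hω] at hv; exact (mem_nbhd.1 hv).2
    choose g hg hg' using this
    simp only [Set.mem_iUnion]
    refine ⟨g, Finset.mem_pi.2 hg, ?_, ?_⟩
    · intro e he
      obtain ⟨v, -, rfl⟩ := Finset.mem_image.1 he
      simpa using hg' v.1 v.2
    · intro e he
      obtain ⟨⟨a, b⟩, hab, rfl⟩ := Finset.mem_image.1 he
      simp only [Finset.mem_product] at hab
      simp only [SimpleGraph.mem_edgeSet]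
      intro hadj
      have hb : b ∉ A ∧ b ∉ S := by simpa [hB] using hab.2
      apply hb.2
      rw [← hω]
      exact mem_nbhd.2 ⟨hb.1, a, hab.1, hadj⟩
  have hbd : ∀ g ∈ S.pi (fun _ => A),
      μ.real {ω | (∀ e ∈ X g, e ∈ (G ω).edgeSet) ∧ ∀ e ∈ Y, e ∉ (G ω).edgeSet} ≤
        p ^ S.card * (1 - p) ^ (A.card * (n - A.card - S.card)) := by
    intro g hg
    rw [Finset.mem_pi] at hg
    have hXc : (X g).card = S.card := by
      rw [hXd]
      dsimp only
      rw [Finset.card_image_of_injective, Finset.card_attach]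
      rintro ⟨v, hv⟩ ⟨w, hw⟩ heq
      simp only [Sym2.eq_iff] at heq
      rcases heq with ⟨-, h⟩ | ⟨h, -⟩
      · exact Subtype.ext h
      · exact absurd hw (Finset.disjoint_left.1 hd (h ▸ hg v hv))
    have hYc : Y.card = A.card * (n - A.card - S.card) := by
      rw [hYd, card_prod_image A B hAB, hBc]
    refine le_trans (?_ : _ ≤ p ^ (X g).card * (1 - p) ^ Y.card) (by rw [hXc, hYc])
    apply cyl μ G p hG h0 h1
    · rw [Finset.disjoint_left]
      intro e he he'
      obtain ⟨⟨v, hv⟩, -, rfl⟩ := Finset.mem_image.1 he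
      obtain ⟨⟨a, b⟩, hab, heq⟩ := Finset.mem_image.1 he'
      simp only [Finset.mem_product] at hab
      have hb : b ∉ A ∧ b ∉ S := by simpa [hB] using hab.2
      simp only [Sym2.eq_iff] at heq
      rcases heq with ⟨-, h⟩ | ⟨-, h⟩
      · exact hb.2 (h ▸ hv)
      · exact hb.1 (h ▸ hg v hv)
    · intro e he
      obtain ⟨⟨v, hv⟩, -, rfl⟩ := Finset.mem_image.1 he
      simp only [Sym2.mk_isDiag_iff]
      intro h
      have h2 := hg v hv
      rw [h] at h2
      exact Finset.disjoint_left.1 hd h2 hv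
    · intro e he
      obtain ⟨⟨a, b⟩, hab, rfl⟩ := Finset.mem_image.1 he
      simp only [Finset.mem_product] at hab
      simp only [Sym2.mk_isDiag_iff]
      rintro rfl
      exact Finset.disjoint_left.1 hAB hab.1 hab.2
  calc _ ≤ _ := measureReal_mono hsub (measure_ne_top _ _)
    _ ≤ _ := measureReal_biUnion_finset_le _ _
    _ ≤ ∑ g ∈ S.pi (fun _ => A), p ^ S.card * (1 - p) ^ (A.card * (n - A.card - S.card)) :=
        Finset.sum_le_sum hbd
    _ = _ := by
        rw [Finset.sum_const, Finset.card_pi]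
        simp only [Finset.prod_const, nsmul_eq_mul, Nat.cast_pow]
        rw [mul_pow]; ring

def Good1 {n : ℕ} (d : ℝ) (G : SimpleGraph (Fin n)) : Prop :=
  ∀ A : Finset (Fin n), (A.card : ℝ) * d ≤ n → d / 20 * A.card ≤ ((nbhd G A).card : ℝ)

def Good2 {n : ℕ} (G : SimpleGraph (Fin n)) : Prop :=
  ∀ A B : Finset (Fin n), Disjoint A B → (n : ℝ) / 40 ≤ A.card → (n : ℝ) / 40 ≤ B.card →
    ∃ a ∈ A, ∃ b ∈ B, G.Adj a b

def Good3 {n : ℕ} (d : ℝ) (G : SimpleGraph (Fin n)) : Prop :=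
  ∀ v : Fin n, ((nbhd G {v}).card : ℝ) ≤ 8 * d

lemma one_sub_pow_le (p : ℝ) (h1 : p ≤ 1) (k : ℕ) (x : ℝ) (hx : x ≤ p * k) :
    (1 - p) ^ k ≤ Real.exp (-x) := by
  calc (1 - p) ^ k ≤ Real.exp (-p) ^ k :=
        pow_le_pow_left₀ (by linarith) (Real.one_sub_le_exp_neg p) k
    _ = Real.exp (k * (-p)) := (Real.exp_nat_mul _ _).symm
    _ ≤ _ := Real.exp_le_exp.2 (by linarith)

lemma sum_pow_card_le (n : ℕ) (x : ℝ) (hx : 0 ≤ x) :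
    ∑ S : Finset (Fin n), x ^ S.card ≤ Real.exp (n * x) := by
  have := Fintype.sum_pow_mul_eq_add_pow (Fin n) x 1
  simp only [one_pow, mul_one, Fintype.card_fin] at this
  rw [this, Real.exp_nat_mul]
  exact pow_le_pow_left₀ (by linarith) (by linarith [Real.add_one_le_exp x]) n

lemma exp_two_bounds : (4 : ℝ) ≤ Real.exp 2 ∧ Real.exp 2 ≤ 8 := by
  have h1 := Real.exp_one_gt_d9
  have h2 := Real.exp_one_lt_d9
  have : Real.exp 2 = Real.exp 1 * Real.exp 1 := by rw [← Real.exp_add]; norm_num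
  rw [this]; constructor <;> nlinarith

lemma p1_fix {n : ℕ} {Ω : Type} [MeasurableSpace Ω] (μ : Measure Ω) [IsProbabilityMeasure μ]
    (G : Ω → SimpleGraph (Fin n)) (p : ℝ) (hG : IsErdosRenyi μ G p) (h0 : 0 ≤ p) (h1 : p ≤ 1)
    (d : ℝ) (hd : d = n * p) (hd4 : 4 ≤ d) (A : Finset (Fin n)) (hA : (A.card : ℝ) * d ≤ n) :
    μ.real {ω | ((nbhd (G ω) A).card : ℝ) < d / 20 * A.card} ≤
      Real.exp (- (A.card * d / 10)) := by
  classical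
  set a := A.card with ha
  set F : Finset (Finset (Fin n)) := univ.filter (fun S => (S.card : ℝ) < d / 20 * a) with hF
  have hsub : {ω | ((nbhd (G ω) A).card : ℝ) < d / 20 * a} ⊆
      ⋃ S ∈ F, {ω | nbhd (G ω) A = S} := by
    intro ω hω
    simp only [Set.mem_iUnion]
    exact ⟨nbhd (G ω) A, by simpa [hF] using hω, rfl⟩
  have ha0 : (0 : ℝ) ≤ a := Nat.cast_nonneg _
  obtain ⟨e4, e8⟩ := exp_two_bounds
  have hx0 : 0 ≤ a * p * Real.exp (-2) := by positivity
  have hb : ∀ S ∈ F, μ.real {ω | nbhd (G ω) A = S} ≤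
      Real.exp (d * a / 10 - a * d / 2) * (a * p * Real.exp (-2)) ^ S.card := by
    intro S hS
    have hS' : (S.card : ℝ) < d / 20 * a := by simpa [hF] using hS
    refine (nbhd_eq μ G p hG h0 h1 A S).trans ?_
    rw [← ha]
    have hn : (a : ℝ) + S.card ≤ n / 2 := by nlinarith
    have hn' : a + S.card ≤ n := by
      have : (a : ℝ) + S.card ≤ n := by have : (0:ℝ) ≤ n := Nat.cast_nonneg _; linarith
      exact_mod_cast this
    have t1 : (1 - p) ^ (a * (n - a - S.card)) ≤ Real.exp (-(a * d / 2)) := by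
      apply one_sub_pow_le p h1
      rw [Nat.sub_sub]
      push_cast [Nat.cast_sub hn']
      rw [hd]
      have : 0 ≤ (a : ℝ) * p := by positivity
      nlinarith
    have t2 : (a * p : ℝ) ^ S.card ≤ Real.exp (d * a / 10) * (a * p * Real.exp (-2)) ^ S.card := by
      rw [mul_pow (a * p : ℝ), ← Real.exp_nat_mul, mul_left_comm, ← Real.exp_add]
      apply le_mul_of_one_le_right (by positivity)
      apply Real.one_le_exp
      linarith
    calc _ ≤ (Real.exp (d * a / 10) * (a * p * Real.exp (-2)) ^ S.card) *
          Real.exp (-(a * d / 2)) := by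
            apply mul_le_mul t2 t1 (pow_nonneg (by linarith) _) (by positivity)
      _ = _ := by rw [sub_eq_add_neg, Real.exp_add]; ring
  calc _ ≤ _ := measureReal_mono hsub (measure_ne_top _ _)
    _ ≤ _ := measureReal_biUnion_finset_le _ _
    _ ≤ ∑ S ∈ F, Real.exp (d * a / 10 - a * d / 2) * (a * p * Real.exp (-2)) ^ S.card :=
        Finset.sum_le_sum hb
    _ ≤ ∑ S : Finset (Fin n),
          Real.exp (d * a / 10 - a * d / 2) * (a * p * Real.exp (-2)) ^ S.card := by
        apply Finset.sum_le_sum_of_subset_of_nonneg (Finset.subset_univ _)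
        intros; positivity
    _ ≤ Real.exp (d * a / 10 - a * d / 2) * Real.exp (n * (a * p * Real.exp (-2))) := by
        rw [← Finset.mul_sum]
        exact mul_le_mul_of_nonneg_left (sum_pow_card_le n _ hx0) (Real.exp_nonneg _)
    _ ≤ _ := by
        rw [← Real.exp_add]
        apply Real.exp_le_exp.2
        have h2 : Real.exp (-2) ≤ 1 / 4 := by
          rw [Real.exp_neg, one_div]; exact inv_anti₀ (by norm_num) e4
        have h3 : (n : ℝ) * (a * p * Real.exp (-2)) = a * d * Real.exp (-2) := by rw [hd]; ring
        rw [h3]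
        have : 0 ≤ a * d := by positivity
        nlinarith

lemma p1_bad {n : ℕ} {Ω : Type} [MeasurableSpace Ω] (μ : Measure Ω) [IsProbabilityMeasure μ]
    (G : Ω → SimpleGraph (Fin n)) (p : ℝ) (hG : IsErdosRenyi μ G p) (h0 : 0 ≤ p) (h1 : p ≤ 1)
    (d : ℝ) (hd : d = n * p) (hd4 : 4 ≤ d) (hdn : n * Real.exp (-(d / 20)) ≤ 1) :
    μ.real {ω | ¬ Good1 d (G ω)} ≤ 3 * Real.exp (-(d / 20)) := by
  classical
  set F : Finset (Finset (Fin n)) :=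
    univ.filter (fun A => A.Nonempty ∧ (A.card : ℝ) * d ≤ n) with hF
  have hsub : {ω | ¬ Good1 d (G ω)} ⊆
      ⋃ A ∈ F, {ω | ((nbhd (G ω) A).card : ℝ) < d / 20 * A.card} := by
    intro ω hω
    simp only [Good1, Set.mem_ofPred_eq, not_forall, not_le] at hω
    obtain ⟨A, hA, hlt⟩ := hω
    simp only [Set.mem_iUnion]
    refine ⟨A, ?_, hlt⟩
    simp only [hF, Finset.mem_filter, Finset.mem_univ, true_and]
    refine ⟨?_, hA⟩
    rw [Finset.nonempty_iff_ne_empty]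
    rintro rfl
    simp at hlt
    have : (0 : ℝ) ≤ (nbhd (G ω) ∅).card := Nat.cast_nonneg _
    linarith
  set y := Real.exp (-(d / 20)) with hy
  have hy0 : 0 < y := Real.exp_pos _
  have hb : ∀ A ∈ F, μ.real {ω | ((nbhd (G ω) A).card : ℝ) < d / 20 * A.card} ≤ y * y ^ A.card := by
    intro A hA
    simp only [hF, Finset.mem_filter, Finset.mem_univ, true_and] at hA
    refine (p1_fix μ G p hG h0 h1 d hd hd4 A hA.2).trans ?_
    rw [hy, ← Real.exp_nat_mul, ← Real.exp_add]
    apply Real.exp_le_exp.2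
    have : (1 : ℝ) ≤ A.card := by exact_mod_cast hA.1.card_pos
    nlinarith
  calc _ ≤ _ := measureReal_mono hsub (measure_ne_top _ _)
    _ ≤ _ := measureReal_biUnion_finset_le _ _
    _ ≤ ∑ A ∈ F, y * y ^ A.card := Finset.sum_le_sum hb
    _ ≤ ∑ A : Finset (Fin n), y * y ^ A.card := by
        apply Finset.sum_le_sum_of_subset_of_nonneg (Finset.subset_univ _)
        intros; positivity
    _ ≤ y * Real.exp (n * y) := by
        rw [← Finset.mul_sum]
        exact mul_le_mul_of_nonneg_left (sum_pow_card_le n _ hy0.le) hy0.le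
    _ ≤ y * 3 := by
        apply mul_le_mul_of_nonneg_left _ hy0.le
        calc Real.exp (n * y) ≤ Real.exp 1 := Real.exp_le_exp.2 hdn
          _ ≤ 3 := by linarith [Real.exp_one_lt_d9]
    _ = _ := by ring

lemma p2_bad {n : ℕ} {Ω : Type} [MeasurableSpace Ω] (μ : Measure Ω) [IsProbabilityMeasure μ]
    (G : Ω → SimpleGraph (Fin n)) (p : ℝ) (hG : IsErdosRenyi μ G p) (h0 : 0 ≤ p) (h1 : p ≤ 1)
    (d : ℝ) (hd : d = n * p) (hd4 : 6400 ≤ d) (hn : 1 ≤ n) :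
    μ.real {ω | ¬ Good2 (G ω)} ≤ Real.exp (-(d / 3200)) := by
  classical
  set F : Finset (Finset (Fin n) × Finset (Fin n)) :=
    univ.filter (fun q => Disjoint q.1 q.2 ∧ (n : ℝ) / 40 ≤ q.1.card ∧ (n : ℝ) / 40 ≤ q.2.card)
    with hF
  have hsub : {ω | ¬ Good2 (G ω)} ⊆
      ⋃ q ∈ F, {ω | ∀ a ∈ q.1, ∀ b ∈ q.2, ¬ (G ω).Adj a b} := by
    intro ω hω
    simp only [Good2, Set.mem_ofPred_eq] at hω
    push Not at hω
    obtain ⟨A, B, hAB, hA, hB, h⟩ := hω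
    simp only [Set.mem_iUnion]
    refine ⟨(A, B), ?_, h⟩
    simp only [hF, Finset.mem_filter, Finset.mem_univ, true_and]
    exact ⟨hAB, hA, hB⟩
  have hn0 : (1 : ℝ) ≤ n := by exact_mod_cast hn
  have hb : ∀ q ∈ F, μ.real {ω | ∀ a ∈ q.1, ∀ b ∈ q.2, ¬ (G ω).Adj a b} ≤
      Real.exp (-(n * d / 1600)) := by
    rintro ⟨A, B⟩ hq
    simp only [hF, Finset.mem_filter, Finset.mem_univ, true_and] at hq
    obtain ⟨hAB, hA, hB⟩ := hq
    refine (no_edge μ G p hG h0 h1 A B hAB).trans ?_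
    apply one_sub_pow_le p h1
    push_cast
    have : (n : ℝ) / 40 * (n / 40) ≤ A.card * B.card :=
      mul_le_mul hA hB (by positivity) (by positivity)
    rw [hd]
    nlinarith
  have hFc : (F.card : ℝ) ≤ Real.exp (2 * n) := by
    have h : F.card ≤ 2 ^ n * 2 ^ n := by
      refine (Finset.card_le_univ F).trans ?_
      simp
    have h' : (F.card : ℝ) ≤ 2 ^ n * 2 ^ n := by exact_mod_cast h
    refine h'.trans ?_
    rw [← mul_pow, mul_comm 2 (n : ℝ), Real.exp_nat_mul]
    apply pow_le_pow_left₀ (by norm_num)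
    linarith [exp_two_bounds.1]
  calc _ ≤ _ := measureReal_mono hsub (measure_ne_top _ _)
    _ ≤ _ := measureReal_biUnion_finset_le _ _
    _ ≤ ∑ q ∈ F, Real.exp (-(n * d / 1600)) := Finset.sum_le_sum hb
    _ = F.card * Real.exp (-(n * d / 1600)) := by rw [Finset.sum_const, nsmul_eq_mul]
    _ ≤ Real.exp (2 * n) * Real.exp (-(n * d / 1600)) :=
        mul_le_mul_of_nonneg_right hFc (Real.exp_nonneg _)
    _ ≤ _ := by
        rw [← Real.exp_add]
        apply Real.exp_le_exp.2
        nlinarith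

lemma p3_bad {n : ℕ} {Ω : Type} [MeasurableSpace Ω] (μ : Measure Ω) [IsProbabilityMeasure μ]
    (G : Ω → SimpleGraph (Fin n)) (p : ℝ) (hG : IsErdosRenyi μ G p) (h0 : 0 ≤ p) (h1 : p ≤ 1)
    (d : ℝ) (hd : d = n * p) :
    μ.real {ω | ¬ Good3 d (G ω)} ≤ n * Real.exp (-(8 * d)) := by
  classical
  set m := ⌈8 * d⌉₊ with hm
  have hd0 : 0 ≤ d := by rw [hd]; positivity
  have hm8 : 8 * d ≤ m := Nat.le_ceil _
  set F : Finset (Fin n × Finset (Fin n)) :=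
    (univ ×ˢ univ.powersetCard m).filter (fun q => q.1 ∉ q.2) with hF
  have hsub : {ω | ¬ Good3 d (G ω)} ⊆
      ⋃ q ∈ F, {ω | ∀ b ∈ q.2, (G ω).Adj q.1 b} := by
    intro ω hω
    simp only [Good3, Set.mem_ofPred_eq] at hω
    push Not at hω
    obtain ⟨v, hv⟩ := hω
    have : m ≤ (nbhd (G ω) {v}).card := Nat.ceil_le.2 hv.le
    obtain ⟨S, hS, hSc⟩ := Finset.exists_subset_card_eq this
    simp only [Set.mem_iUnion]
    refine ⟨(v, S), ?_, ?_⟩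
    · simp only [hF, Finset.mem_filter, Finset.mem_product, Finset.mem_univ, true_and,
        Finset.mem_powersetCard, Finset.subset_univ]
      refine ⟨hSc, fun h => ?_⟩
      exact (mem_nbhd.1 (hS h)).1 (by simp)
    · intro b hb
      obtain ⟨-, u, hu, h⟩ := mem_nbhd.1 (hS hb)
      rw [Finset.mem_singleton] at hu
      exact hu ▸ h
  have hb : ∀ q ∈ F, μ.real {ω | ∀ b ∈ q.2, (G ω).Adj q.1 b} ≤ p ^ m := by
    rintro ⟨v, S⟩ hq
    simp only [hF, Finset.mem_filter, Finset.mem_product, Finset.mem_univ, true_and,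
        Finset.mem_powersetCard, Finset.subset_univ] at hq
    have := star μ G p hG h0 h1 v S hq.2
    rwa [hq.1] at this
  have hFc : (F.card : ℝ) ≤ n * ((n : ℝ) ^ m / m.factorial) := by
    have h : F.card ≤ n * n.choose m := by
      refine (Finset.card_filter_le _ _).trans ?_
      simp [Finset.card_product]
    have h' : (F.card : ℝ) ≤ n * n.choose m := by exact_mod_cast h
    refine h'.trans (mul_le_mul_of_nonneg_left (Nat.choose_le_pow_div m n) (Nat.cast_nonneg _))
  calc _ ≤ _ := measureReal_mono hsub (measure_ne_top _ _)
    _ ≤ _ := measureReal_biUnion_finset_le _ _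
    _ ≤ ∑ q ∈ F, p ^ m := Finset.sum_le_sum hb
    _ = F.card * p ^ m := by rw [Finset.sum_const, nsmul_eq_mul]
    _ ≤ n * ((n : ℝ) ^ m / m.factorial) * p ^ m :=
        mul_le_mul_of_nonneg_right hFc (by positivity)
    _ = n * (d ^ m / m.factorial) := by rw [hd, mul_pow]; ring
    _ ≤ n * (((m : ℝ) / 8) ^ m / m.factorial) := by
        gcongr; linarith
    _ = n * (((m : ℝ) ^ m / m.factorial) / 8 ^ m) := by rw [div_pow]; ring
    _ ≤ n * (Real.exp m / Real.exp 2 ^ m) := by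
        have := Real.pow_div_factorial_le_exp (m : ℝ) (Nat.cast_nonneg _) m
        have h8 : Real.exp 2 ^ m ≤ (8 : ℝ) ^ m :=
          pow_le_pow_left₀ (Real.exp_nonneg _) exp_two_bounds.2 m
        gcongr
    _ = n * Real.exp (-m) := by
        rw [← Real.exp_nat_mul, ← Real.exp_sub]; congr 2; ring
    _ ≤ _ := by gcongr

lemma informed_card_le {n : ℕ} (Gs : ℕ → SimpleGraph (Fin n)) (d : ℝ) (hd : 0 ≤ d) (s : Fin n)
    (T : ℕ) (h : ∀ t < T, Good3 d (Gs t)) (t : ℕ) (ht : t ≤ T) :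
    ((informed Gs s t).card : ℝ) ≤ (1 + 8 * d) ^ t := by
  classical
  induction t with
  | zero => simp [informed]
  | succ t ih =>
    have ih := ih (by omega)
    have hg := h t (by omega)
    set I := informed Gs s t with hI
    have h1 : nbhd (Gs t) I ⊆ I.biUnion (fun u => nbhd (Gs t) {u}) := by
      intro v hv
      obtain ⟨hv, u, hu, ha⟩ := mem_nbhd.1 hv
      exact Finset.mem_biUnion.2 ⟨u, hu, mem_nbhd.2 ⟨by simpa using ha.ne', u, by simp, ha⟩⟩
    have h2 : ((nbhd (Gs t) I).card : ℝ) ≤ I.card * (8 * d) := by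
      calc ((nbhd (Gs t) I).card : ℝ) ≤ ∑ u ∈ I, ((nbhd (Gs t) {u}).card : ℝ) := by
            exact_mod_cast (Finset.card_le_card h1).trans Finset.card_biUnion_le
        _ ≤ ∑ u ∈ I, 8 * d := Finset.sum_le_sum fun u _ => hg u
        _ = _ := by rw [Finset.sum_const, nsmul_eq_mul]
    have h3 : (((informed Gs s (t + 1)).card : ℕ) : ℝ) ≤ I.card + (nbhd (Gs t) I).card := by
      exact_mod_cast Finset.card_union_le I (nbhd (Gs t) I)
    rw [pow_succ]
    nlinarith

lemma informed_succ_sub {n : ℕ} (Gs : ℕ → SimpleGraph (Fin n)) (s : Fin n) (t : ℕ) :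
    informed Gs s t ⊆ informed Gs s (t + 1) := Finset.subset_union_left

lemma informed_step {n : ℕ} (Gs : ℕ → SimpleGraph (Fin n)) (s : Fin n) (t : ℕ) (u v : Fin n)
    (hu : u ∈ informed Gs s t) (h : (Gs t).Adj u v) : v ∈ informed Gs s (t + 1) := by
  by_cases hv : v ∈ informed Gs s t
  · exact informed_succ_sub Gs s t hv
  · exact Finset.mem_union_right _ (mem_nbhd.2 ⟨hv, u, hu, h⟩)

lemma big_sub {n : ℕ} (G : SimpleGraph (Fin n)) (d : ℝ) (hd : 0 < d) (hdn : d ≤ n)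
    (h : Good1 d G) (A : Finset (Fin n)) (hA : (n : ℝ) < A.card * d) :
    ∃ B ⊆ A, (n : ℝ) / 40 ≤ (nbhd G B).card := by
  have hx : (1 : ℝ) ≤ n / d := (one_le_div hd).2 hdn
  have hh : ⌊(n : ℝ) / d⌋₊ ≤ A.card := by
    have : ⌊(n : ℝ) / d⌋₊ ≤ (n : ℝ) / d := Nat.floor_le (by linarith)
    have h2 : (n : ℝ) / d < A.card := (div_lt_iff₀ hd).2 hA
    exact_mod_cast (this.trans h2.le)
  obtain ⟨B, hB, hBc⟩ := Finset.exists_subset_card_eq hh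
  refine ⟨B, hB, ?_⟩
  have h1 : (B.card : ℝ) ≤ n / d := by rw [hBc]; exact Nat.floor_le (by linarith)
  have h2 : (n : ℝ) / d < B.card + 1 := by rw [hBc]; exact Nat.lt_floor_add_one _
  have h3 : (1 : ℝ) ≤ B.card := by
    rw [hBc]; exact_mod_cast (Nat.one_le_floor_iff _).2 hx
  have h4 := h B ((le_div_iff₀ hd).1 h1)
  have h5 : (n : ℝ) < (B.card + 1) * d := (div_lt_iff₀ hd).1 h2
  nlinarith

lemma forward {n : ℕ} (Gs : ℕ → SimpleGraph (Fin n)) (d : ℝ) (hd : 0 < d) (hdn : d ≤ n)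
    (s : Fin n) (T : ℕ) (h : ∀ t < T, Good1 d (Gs t)) (t : ℕ) (ht : t ≤ T) :
    (n : ℝ) / 40 ≤ (informed Gs s t).card ∨ (d / 20) ^ t ≤ (informed Gs s t).card := by
  induction t with
  | zero => right; simp [informed]
  | succ t ih =>
    have hg := h t (by omega)
    rcases ih (by omega) with ih | ih
    · left
      exact ih.trans (by exact_mod_cast Finset.card_le_card (informed_succ_sub Gs s t))
    · by_cases hc : ((informed Gs s t).card : ℝ) * d ≤ n
      · right
        have h1 := hg _ hc
        have h2 : ((nbhd (Gs t) (informed Gs s t)).card : ℝ) ≤ (informed Gs s (t + 1)).card := by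
          exact_mod_cast Finset.card_le_card Finset.subset_union_right
        rw [pow_succ]
        have : (d / 20) ^ t * (d / 20) ≤ (informed Gs s t).card * (d / 20) :=
          mul_le_mul_of_nonneg_right ih (by positivity)
        linarith
      · left
        obtain ⟨B, hB, hBc⟩ := big_sub (Gs t) d hd hdn hg _ (not_le.1 hc)
        refine hBc.trans ?_
        have : nbhd (Gs t) B ⊆ informed Gs s (t + 1) := by
          intro v hv
          obtain ⟨-, u, hu, ha⟩ := mem_nbhd.1 hv
          exact informed_step Gs s t u v (hB hu) ha
        exact_mod_cast Finset.card_le_card this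

lemma backward_sub {n : ℕ} (Gs : ℕ → SimpleGraph (Fin n)) (s : Fin n) (t : ℕ)
    (B : Finset (Fin n)) (hB : B ⊆ (informed Gs s (t + 1))ᶜ) :
    nbhd (Gs t) B ⊆ (informed Gs s t)ᶜ := by
  intro v hv
  obtain ⟨-, u, hu, ha⟩ := mem_nbhd.1 hv
  rw [Finset.mem_compl]
  intro hv
  exact (Finset.mem_compl.1 (hB hu)) (informed_step Gs s t v u hv ha.symm)

lemma backward {n : ℕ} (Gs : ℕ → SimpleGraph (Fin n)) (d : ℝ) (hd : 20 ≤ d) (hdn : d ≤ n)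
    (s : Fin n) (T : ℕ) (h : ∀ t < T, Good1 d (Gs t)) (t₀ : ℕ)
    (h0 : ((informed Gs s t₀)ᶜ.card : ℝ) < n / 40) (r : ℕ) (ht : t₀ + r ≤ T) :
    (d / 20) ^ r * ((informed Gs s (t₀ + r))ᶜ.card : ℝ) < n / 40 := by
  have hd0 : 0 < d := by linarith
  induction r with
  | zero => simpa using h0
  | succ r ih =>
    have ih := ih (by omega)
    have hg := h (t₀ + r) (by omega)
    have hp : (1 : ℝ) ≤ (d / 20) ^ r := one_le_pow₀ (by linarith)
    set J := (informed Gs s (t₀ + r))ᶜ with hJ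
    rw [← add_assoc]
    set J' := (informed Gs s (t₀ + r + 1))ᶜ with hJ'
    have hJ0 : (0 : ℝ) ≤ J.card := Nat.cast_nonneg _
    have hJl : (J.card : ℝ) < n / 40 := by nlinarith
    by_cases hc : (J'.card : ℝ) * d ≤ n
    · have h1 := hg _ hc
      have h2 : ((nbhd (Gs (t₀ + r)) J').card : ℝ) ≤ J.card := by
        exact_mod_cast Finset.card_le_card (backward_sub Gs s (t₀ + r) J' subset_rfl)
      rw [pow_succ, mul_assoc]
      have : (d / 20) ^ r * (d / 20 * J'.card) ≤ (d / 20) ^ r * J.card :=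
        mul_le_mul_of_nonneg_left (h1.trans h2) (by linarith)
      linarith
    · obtain ⟨B, hB, hBc⟩ := big_sub _ d hd0 hdn hg _ (not_le.1 hc)
      have h2 : ((nbhd (Gs (t₀ + r)) B).card : ℝ) ≤ J.card := by
        exact_mod_cast Finset.card_le_card (backward_sub Gs s (t₀ + r) B hB)
      linarith

lemma flood_upper {n : ℕ} (Gs : ℕ → SimpleGraph (Fin n)) (d : ℝ) (hd : 20 ≤ d) (hdn : d ≤ n)
    (r : ℕ) (hr : (n : ℝ) ≤ (d / 20) ^ r)
    (h : ∀ t < 2 * r + 1, Good1 d (Gs t)) (h2 : ∀ t < 2 * r + 1, Good2 (Gs t)) (s : Fin n) :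
    informed Gs s (2 * r + 1) = Finset.univ := by
  have hd0 : 0 < d := by linarith
  have hn0 : (0 : ℝ) < n := by linarith
  have h1 : (n : ℝ) / 40 ≤ (informed Gs s r).card := by
    rcases forward Gs d hd0 hdn s _ h r (by omega) with h | h
    · exact h
    · linarith
  have h3 : ((informed Gs s (r + 1))ᶜ.card : ℝ) < n / 40 := by
    by_contra hc
    push Not at hc
    obtain ⟨a, ha, b, hb, hab⟩ := h2 r (by omega) (informed Gs s r) (informed Gs s (r + 1))ᶜ (by
      rw [Finset.disjoint_left]
      intro a ha hb
      exact (Finset.mem_compl.1 hb) (informed_succ_sub Gs s r ha)) h1 hc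
    exact (Finset.mem_compl.1 hb) (informed_step Gs s r a b ha hab)
  have h4 := backward Gs d hd hdn s _ h (r + 1) h3 r (by omega)
  have e : r + 1 + r = 2 * r + 1 := by ring
  rw [e] at h4
  have h5 : ((informed Gs s (2 * r + 1))ᶜ.card : ℝ) < 1 := by
    by_contra hc
    push Not at hc
    nlinarith
  have h6 : (informed Gs s (2 * r + 1))ᶜ.card = 0 := by
    have : (informed Gs s (2 * r + 1))ᶜ.card < 1 := by exact_mod_cast h5
    omega
  rwa [Finset.card_eq_zero, Finset.compl_eq_empty_iff] at h6

lemma p_le_one {n : ℕ} {Ω : Type} [MeasurableSpace Ω] (μ : Measure Ω) [IsProbabilityMeasure μ]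
    (G : Ω → SimpleGraph (Fin n)) (p : ℝ) (hG : IsErdosRenyi μ G p) (hn : 3 ≤ n) : p ≤ 1 := by
  classical
  by_contra hp
  push Not at hp
  have h := hG ⊤
  have hc : Nat.card (⊤ : SimpleGraph (Fin n)).edgeSet = n.choose 2 := by
    rw [Nat.card_eq_fintype_card, ← SimpleGraph.edgeFinset_card,
      SimpleGraph.card_edgeFinset_top_eq_card_choose_two, Fintype.card_fin]
  rw [hc, Nat.sub_self, pow_zero, mul_one] at h
  have h1 : μ {ω | G ω = ⊤} ≤ 1 := prob_le_one
  rw [h, ENNReal.ofReal_le_one] at h1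
  have : 0 < n.choose 2 := Nat.choose_pos (by omega)
  have := one_lt_pow₀ hp this.ne'
  linarith

lemma graph_bad {n : ℕ} {Ω : Type} [MeasurableSpace Ω] (μ : Measure Ω) [IsProbabilityMeasure μ]
    (G : Ω → SimpleGraph (Fin n)) (p : ℝ) (hG : IsErdosRenyi μ G p) (h0 : 0 ≤ p) (h1 : p ≤ 1)
    (d : ℝ) (hd : d = n * p) (hn : 3 ≤ n) (hdn : 100000 * Real.log n ≤ d) :
    μ.real {ω | ¬ (Good1 d (G ω) ∧ Good2 (G ω) ∧ Good3 d (G ω))} ≤ 5 / (n : ℝ) ^ 4 := by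
  have hn0 : (3 : ℝ) ≤ n := by exact_mod_cast hn
  have hlog : 1 ≤ Real.log n := by
    rw [Real.le_log_iff_exp_le (by linarith)]
    linarith [Real.exp_one_lt_d9]
  have key : ∀ (x : ℝ) (k : ℕ), k * Real.log n ≤ x → Real.exp (-x) ≤ 1 / (n : ℝ) ^ k := by
    intro x k hx
    have : (1 : ℝ) / n ^ k = Real.exp (-(k * Real.log n)) := by
      rw [Real.exp_neg, Real.exp_nat_mul, Real.exp_log (by linarith), one_div]
    rw [this]
    exact Real.exp_le_exp.2 (by linarith)
  have k1 := key (d / 20) 4 (by push_cast; linarith)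
  have k1' := key (d / 20) 1 (by push_cast; linarith)
  have k2 := key (d / 3200) 4 (by push_cast; linarith)
  have k3 := key (8 * d) 5 (by push_cast; linarith)
  have b1 := p1_bad μ G p hG h0 h1 d hd (by linarith) (by
    rw [pow_one] at k1'
    calc n * Real.exp (-(d / 20)) ≤ n * (1 / n) := by gcongr
      _ = 1 := by field_simp)
  have b2 := p2_bad μ G p hG h0 h1 d hd (by linarith) (by omega)
  have b3 := p3_bad μ G p hG h0 h1 d hd
  have b3' : n * Real.exp (-(8 * d)) ≤ 1 / (n : ℝ) ^ 4 := by
    calc n * Real.exp (-(8 * d)) ≤ n * (1 / (n : ℝ) ^ 5) := by gcongr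
      _ = _ := by field_simp
  have hsub : {ω | ¬ (Good1 d (G ω) ∧ Good2 (G ω) ∧ Good3 d (G ω))} ⊆
      {ω | ¬ Good1 d (G ω)} ∪ ({ω | ¬ Good2 (G ω)} ∪ {ω | ¬ Good3 d (G ω)}) := by
    intro ω hω
    simp only [Set.mem_ofPred_eq, Set.mem_union] at hω ⊢
    tauto
  have u1 := measureReal_mono (μ := μ) hsub (measure_ne_top _ _)
  have u2 := measureReal_union_le (μ := μ) {ω | ¬ Good1 d (G ω)}
    ({ω | ¬ Good2 (G ω)} ∪ {ω | ¬ Good3 d (G ω)})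
  have u3 := measureReal_union_le (μ := μ) {ω | ¬ Good2 (G ω)} {ω | ¬ Good3 d (G ω)}
  have : (5 : ℝ) / n ^ 4 = 3 * (1 / n ^ 4) + 1 / n ^ 4 + 1 / n ^ 4 := by ring
  rw [this]
  linarith

/-- tightness of flooding time of stationary edge-MEG. -/
theorem edge_flooding_tight :
    ∃ c c1 c2 : ℝ, 0 < c ∧ 0 < c1 ∧ 0 < c2 ∧
      ∀ (n : ℕ) (phat : ℝ) (Ω : Type) [MeasurableSpace Ω] (μ : Measure Ω)
        [IsProbabilityMeasure μ] (Gs : ℕ → Ω → SimpleGraph (Fin n)),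
        3 ≤ n → c * Real.log n / n ≤ phat →
        phat ≤ (n : ℝ) ^ ((1 : ℝ) / Real.log (Real.log n)) / n →
        (∀ t : ℕ, IsErdosRenyi μ (Gs t) phat) →
        ENNReal.ofReal (1 - 2 / (n : ℝ)) ≤
          μ {ω |
            (∃ T : ℕ, (T : ℝ) ≤ c2 * Real.log n / Real.log ((n : ℝ) * phat) ∧
              ∀ src : Fin n, informed (fun t => Gs t ω) src T = Finset.univ) ∧
            (∀ t : ℕ, (t : ℝ) < c1 * Real.log n / Real.log ((n : ℝ) * phat) →
              ∃ src : Fin n, informed (fun t' => Gs t' ω) src t ≠ Finset.univ)} := by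
  refine ⟨100000, 1 / 2, 7, by norm_num, by norm_num, by norm_num, ?_⟩
  intro n p Ω _ μ _ Gs hn hp _ hG
  classical
  have hn0 : (3 : ℝ) ≤ n := by exact_mod_cast hn
  have hlog : 1 ≤ Real.log n := by
    rw [Real.le_log_iff_exp_le (by linarith)]
    linarith [Real.exp_one_lt_d9]
  have h1 : p ≤ 1 := p_le_one μ (Gs 0) p (hG 0) hn
  have h0 : 0 ≤ p := le_trans (by positivity) hp
  obtain ⟨d, hd⟩ : ∃ d : ℝ, d = n * p := ⟨_, rfl⟩
  rw [← hd]
  have hdl : 100000 * Real.log n ≤ d := by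
    rw [div_le_iff₀ (by linarith)] at hp
    rw [hd]; linarith
  have hd5 : 100000 ≤ d := by linarith
  have hdn : d ≤ n := by rw [hd]; nlinarith
  have hld : 1 ≤ Real.log d := by
    rw [Real.le_log_iff_exp_le (by linarith)]
    linarith [Real.exp_one_lt_d9]
  have hldn : Real.log d ≤ Real.log n := Real.log_le_log (by linarith) hdn
  set L := Real.log n / Real.log d with hL
  have hL1 : 1 ≤ L := (one_le_div (by linarith)).2 hldn
  have hLn : L ≤ n := by
    have : L ≤ Real.log n := div_le_self (by linarith) hld
    have := Real.log_le_sub_one_of_pos (show (0:ℝ) < n by linarith)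
    linarith
  have hLd : L * Real.log d = Real.log n := div_mul_cancel₀ _ (by linarith)
  set r := ⌈2 * L⌉₊ with hr
  have hr1 : 2 * L ≤ r := Nat.le_ceil _
  have hr2 : (r : ℝ) < 2 * L + 1 := Nat.ceil_lt_add_one (by linarith)
  have hrn : (n : ℝ) ≤ (d / 20) ^ r := by
    rw [← Real.log_le_log_iff (by linarith) (by positivity), Real.log_pow]
    have hsq : Real.log d ≤ 2 * Real.log (d / 20) := by
      have : 2 * Real.log (d / 20) = Real.log ((d / 20) ^ 2) := by
        rw [Real.log_pow]; norm_num
      rw [this]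
      apply Real.log_le_log (by linarith)
      nlinarith
    nlinarith
  set T := 2 * r + 1 with hT
  have hT7 : (T : ℝ) ≤ 7 * L := by
    rw [hT]; push_cast; linarith
  set good := {ω | (∃ T : ℕ, (T : ℝ) ≤ 7 * Real.log n / Real.log d ∧
              ∀ src : Fin n, informed (fun t => Gs t ω) src T = Finset.univ) ∧
            (∀ t : ℕ, (t : ℝ) < 1 / 2 * Real.log n / Real.log d →
              ∃ src : Fin n, informed (fun t' => Gs t' ω) src t ≠ Finset.univ)} with hgood
  set bad := ⋃ t ∈ Finset.range T,
    {ω | ¬ (Good1 d (Gs t ω) ∧ Good2 (Gs t ω) ∧ Good3 d (Gs t ω))} with hbad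
  have hcov : (Set.univ : Set Ω) ⊆ good ∪ bad := by
    intro ω _
    by_cases hb : ω ∈ bad
    · exact Or.inr hb
    left
    simp only [hbad, Set.mem_iUnion, Finset.mem_range, Set.mem_ofPred_eq, not_exists,
      not_not] at hb
    simp only [hgood, Set.mem_ofPred_eq]
    refine ⟨⟨T, ?_, ?_⟩, ?_⟩
    · rw [mul_div_assoc]; exact hT7
    · intro src
      exact flood_upper _ d (by linarith) hdn r hrn (fun t ht => (hb t ht).1)
        (fun t ht => (hb t ht).2.1) src
    · intro t ht
      rw [mul_div_assoc, ← hL] at ht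
      have htT : t ≤ T := by
        have : (t : ℝ) ≤ T := by rw [hT]; push_cast; linarith
        exact_mod_cast this
      refine ⟨⟨0, by omega⟩, fun heq => ?_⟩
      have hle := informed_card_le (fun t' => Gs t' ω) d (by linarith) ⟨0, by omega⟩ T
        (fun t ht => (hb t ht).2.2) t htT
      rw [heq, Finset.card_univ, Fintype.card_fin] at hle
      have h2 : (1 + 8 * d) ^ t ≤ (d ^ 2) ^ t :=
        pow_le_pow_left₀ (by linarith) (by nlinarith) t
      have h3 : (d ^ 2) ^ t < n := by
        rw [← Real.log_lt_log_iff (by positivity) (by linarith), Real.log_pow, Real.log_pow,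
          ← hLd]
        push_cast
        nlinarith
      linarith
  have hbadm : μ.real bad ≤ 2 / n := by
    calc μ.real bad ≤ ∑ t ∈ Finset.range T,
          μ.real {ω | ¬ (Good1 d (Gs t ω) ∧ Good2 (Gs t ω) ∧ Good3 d (Gs t ω))} :=
          measureReal_biUnion_finset_le _ _
      _ ≤ ∑ t ∈ Finset.range T, 5 / (n : ℝ) ^ 4 :=
          Finset.sum_le_sum fun t _ => graph_bad μ (Gs t) p (hG t) h0 h1 d hd hn hdl
      _ = T * (5 / (n : ℝ) ^ 4) := by rw [Finset.sum_const, nsmul_eq_mul, Finset.card_range]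
      _ ≤ (7 * n) * (5 / (n : ℝ) ^ 4) := by gcongr; linarith
      _ ≤ 2 / n := by
          have e : (7 * (n : ℝ)) * (5 / (n : ℝ) ^ 4) = (35 / n ^ 2) / n := by field_simp; norm_num
          rw [e]
          gcongr
          rw [div_le_iff₀ (by positivity)]
          nlinarith
  have htot : (1 : ℝ) ≤ μ.real good + μ.real bad := by
    have a1 := measureReal_mono (μ := μ) hcov (measure_ne_top _ _)
    have a2 := measureReal_union_le (μ := μ) good bad
    have a3 : μ.real Set.univ = 1 := probReal_univ
    linarith
  have hfin : 1 - 2 / (n : ℝ) ≤ μ.real good := by linarith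
  calc ENNReal.ofReal (1 - 2 / (n : ℝ)) ≤ ENNReal.ofReal (μ.real good) :=
        ENNReal.ofReal_le_ofReal hfin
    _ = μ good := ofReal_measureReal (measure_ne_top _ _)

end
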